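/- Let d,k ≥ 1 and n ≥ 0. Two trees t,t' ∈ T_n satisfy ld(t) ~_k^d ld(t') if and only if t' can be obtained from t by a finite sequence of left or right k-rotations, each performed at a node of left depth at least d−1. Equivalently, the equivalence classes of the relation 't ~ t' iff ld(t) ~_k^d ld(t')' on T_n are precisely the connected components of the Hasse diagram of the (d;k)-order. -/

import Mathlib

/-- Full binary trees (every internal node has exactly two children). -/
inductive BTree : Type
  | leaf : BTree
  | node : BTree → BTree → BTree
deriving DecidableEq

namespace BTree

/-- Number of leaves of a full binary tree. -/
def numLeaves : BTree → ℕ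
  | leaf => 1
  | node l r => l.numLeaves + r.numLeaves

/-- The list of pairs (left depth, right depth) of the leaves, in preorder. -/
def leafDepths : BTree → List (ℕ × ℕ)
  | leaf => [(0, 0)]
  | node l r =>
      (l.leafDepths.map fun p => (p.1 + 1, p.2)) ++ (r.leafDepths.map fun p => (p.1, p.2 + 1))

/-- The left depth sequence `ld(t)` of the leaves of `t`, in preorder. -/
def ld (t : BTree) : List ℕ := t.leafDepths.map Prod.fst

/-- The right depth sequence `rd(t)` of the leaves of `t`, in preorder. -/
def rd (t : BTree) : List ℕ := t.leafDepths.map Prod.snd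

end BTree

/-- `b ~^d c` : the sequences have equal length and agree at every position where
either entry is `< d`. -/
def DepthEq (d : ℕ) : List ℕ → List ℕ → Prop :=
  List.Forall₂ (fun a b => min a b < d → a = b)

/-- `b ~_k c` : entrywise congruence mod `k` (and equal length). -/
def ModListEq (k : ℕ) : List ℕ → List ℕ → Prop :=
  List.Forall₂ (fun a b => a % k = b % k)

/-- The relation `t ~ t'` iff `ld(t) ~^d ld(t')` and `rd(t) ~^e rd(t')`. -/
def DeRel (d e : ℕ) (t t' : BTree) : Prop :=
  DepthEq d t.ld t'.ld ∧ DepthEq e t.rd t'.rd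

/-- The relation `t ~ t'` iff `ld(t) ~_k^d ld(t')` (i.e. `ld(t) ~_k ld(t')` and
`ld(t) ~^d ld(t')`). -/
def DkRel (d k : ℕ) (t t' : BTree) : Prop :=
  ModListEq k t.ld t'.ld ∧ DepthEq d t.ld t'.ld

/-- `T_n`: full binary trees with `n+1` leaves. -/
def Tn (n : ℕ) : Type := {t : BTree // t.numLeaves = n + 1}

/-- `C^{d,e}_n`: the number of equivalence classes of the relation `DeRel d e` on `T_n`. -/
noncomputable def Cde (d e n : ℕ) : ℕ :=
  Nat.card (Quot (fun t t' : Tn n => DeRel d e t.1 t'.1))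

/-- `C^d_{k,n}`: the number of equivalence classes of `ld(t) ~_k^d ld(t')` on `T_n`. -/
noncomputable def Cdk (d k n : ℕ) : ℕ :=
  Nat.card (Quot (fun t t' : Tn n => DkRel d k t.1 t'.1))

/-- Directions to a left or right child. -/
inductive Dir : Type
  | L : Dir
  | R : Dir
deriving DecidableEq

/-- The maximal subtree rooted at the node at position `p` (if such a node exists). -/
def subtreeAt : BTree → List Dir → Option BTree
  | t, [] => some t
  | BTree.leaf, _ :: _ => none
  | BTree.node l _, Dir.L :: p => subtreeAt l p
  | BTree.node _ r, Dir.R :: p => subtreeAt r p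

/-- Replace the maximal subtree rooted at position `p` by `s` (if the position exists). -/
def replaceAt : BTree → List Dir → BTree → Option BTree
  | _, [], s => some s
  | BTree.leaf, _ :: _, _ => none
  | BTree.node l r, Dir.L :: p, s => (replaceAt l p s).map fun l' => BTree.node l' r
  | BTree.node l r, Dir.R :: p, s => (replaceAt r p s).map fun r' => BTree.node l r'

/-- `leftAssoc t₀ [t₁,…,t_m] = t₀ ∧ t₁ ∧ ⋯ ∧ t_m` with `∧` performed left to right. -/
def leftAssoc : BTree → List BTree → BTree := List.foldl BTree.node

/-- `t'` is obtained from `t` by a right `k`-rotation at the node at position `p`: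
the maximal subtree `t₀ ∧ t₁ ∧ ⋯ ∧ t_{k+1}` rooted there (with `∧` performed left to
right) is replaced by `t₀ ∧ (t₁ ∧ ⋯ ∧ t_{k+1})`.  The left depth of that node is
`p.count Dir.L`. -/
def IsRightKRot (k : ℕ) (p : List Dir) (t t' : BTree) : Prop :=
  ∃ (t₀ t₁ : BTree) (rest : List BTree), rest.length = k ∧
    subtreeAt t p = some (leftAssoc t₀ (t₁ :: rest)) ∧
    replaceAt t p (BTree.node t₀ (leftAssoc t₁ rest)) = some t'

/-- `IsTopOf s u`: `s` is a subtree of `u` rooted at the root of `u`. -/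
def IsTopOf : BTree → BTree → Prop
  | BTree.leaf, _ => True
  | BTree.node l r, BTree.node l' r' => IsTopOf l l' ∧ IsTopOf r r'
  | BTree.node _ _, BTree.leaf => False

/-- `t` contains `s` at left depth `δ`: `t` has a subtree equal to `s` rooted at a node
of left depth `δ`. -/
def ContainsAt (t s : BTree) (δ : ℕ) : Prop :=
  ∃ (p : List Dir) (u : BTree), subtreeAt t p = some u ∧ p.count Dir.L = δ ∧ IsTopOf s u

/-- `t` avoids `s` at left depth `δ`. -/
def AvoidsAt (t s : BTree) (δ : ℕ) : Prop := ¬ ContainsAt t s δ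

/-- `comb_k`: the left-to-right `∧`-product of `k+1` single leaves. -/
def comb (k : ℕ) : BTree := leftAssoc BTree.leaf (List.replicate k BTree.leaf)

/-- `comb_k^1 := t₀ ∧ comb_k` with `t₀` a single leaf. -/
def comb1 (k : ℕ) : BTree := BTree.node BTree.leaf (comb k)

/-- One left `k`-rotation step, at a node of left depth at least `d-1`, from `t` to `t'`. -/
def LeftRotStep (d k : ℕ) (t t' : BTree) : Prop :=
  ∃ p : List Dir, d - 1 ≤ p.count Dir.L ∧ IsRightKRot k p t' t

/-- The `(d;k)`-order: `s ≤ t` iff `s` is obtained from `t` by finitely many left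
`k`-rotations at nodes of left depth at least `d-1`. -/
def dkLE (d k : ℕ) (s t : BTree) : Prop := Relation.ReflTransGen (LeftRotStep d k) t s

/-- `t` is `(d;k)`-minimal. -/
def dkMinimal (d k : ℕ) (t : BTree) : Prop := ∀ s, dkLE d k s t → s = t

/-- `t` is `(d;k)`-maximal. -/
def dkMaximal (d k : ℕ) (t : BTree) : Prop := ∀ s, dkLE d k t s → s = t

namespace S12
open BTree

theorem ld_leaf : ld leaf = [0] := rfl

theorem ld_node (l r : BTree) : ld (node l r) = (ld l).map (· + 1) ++ ld r := by
  simp [ld, leafDepths, Function.comp_def]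

/-- Every left depth sequence consists of positive entries followed by a final zero. -/
theorem ld_shape (t : BTree) : ∃ xs : List ℕ, ld t = xs ++ [0] ∧ ∀ x ∈ xs, 1 ≤ x := by
  induction t with
  | leaf => exact ⟨[], rfl, by simp⟩
  | node l r _ ihr =>
    obtain ⟨xs, h, hx⟩ := ihr
    refine ⟨(ld l).map (· + 1) ++ xs, by rw [ld_node, h, List.append_assoc], ?_⟩
    intro x hxm
    rcases List.mem_append.1 hxm with h1 | h1
    · obtain ⟨y, _, rfl⟩ := List.mem_map.1 h1
      omega
    · exact hx x h1

theorem ld_node_shape (l r : BTree) : ∃ xs : List ℕ, ld l = xs ++ [0] ∧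
    ld (node l r) = xs.map (· + 1) ++ 1 :: ld r ∧ ∀ x ∈ xs.map (· + 1), 2 ≤ x := by
  obtain ⟨xs, h, hx⟩ := ld_shape l
  refine ⟨xs, h, by rw [ld_node, h]; simp, ?_⟩
  intro x hxm
  obtain ⟨y, hy, rfl⟩ := List.mem_map.1 hxm
  have := hx y hy
  show 2 ≤ y + 1
  omega

theorem split {P : ℕ → ℕ → Prop} (hP : ∀ a b, P a b → min a b < 2 → a = b) :
    ∀ (xs xs' ys ys' : List ℕ), (∀ x ∈ xs, 2 ≤ x) → (∀ x ∈ xs', 2 ≤ x) →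
      List.Forall₂ P (xs ++ 1 :: ys) (xs' ++ 1 :: ys') →
      List.Forall₂ P xs xs' ∧ P 1 1 ∧ List.Forall₂ P ys ys' := by
  intro xs
  induction xs with
  | nil =>
    intro xs' ys ys' _ h2 h
    cases xs' with
    | nil =>
      simp only [List.nil_append, List.forall₂_cons] at h
      exact ⟨List.Forall₂.nil, h.1, h.2⟩
    | cons a as =>
      simp only [List.nil_append, List.cons_append, List.forall₂_cons] at h
      have ha := h2 a (by simp)
      have := hP _ _ h.1 (by omega)
      omega
  | cons b bs ih =>
    intro xs' ys ys' h1 h2 h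
    have hb := h1 b (by simp)
    cases xs' with
    | nil =>
      simp only [List.nil_append, List.cons_append, List.forall₂_cons] at h
      have := hP _ _ h.1 (by omega)
      omega
    | cons a as =>
      simp only [List.cons_append, List.forall₂_cons] at h
      obtain ⟨i1, i2, i3⟩ := ih as ys ys' (fun x hx => h1 x (by simp [hx]))
        (fun x hx => h2 x (by simp [hx])) h.2
      exact ⟨List.Forall₂.cons h.1 i1, i2, i3⟩

theorem ld_node_ne (l r : BTree) : ld (node l r) ≠ [] ∧ ∀ P : ℕ → ℕ → Prop,
    ¬ List.Forall₂ P [0] (ld (node l r)) ∧ ¬ List.Forall₂ P (ld (node l r)) [0] := by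
  obtain ⟨xs, h, hx⟩ := ld_shape l
  obtain ⟨ys, h', hx'⟩ := ld_shape r
  rw [ld_node, h, h']
  refine ⟨by simp, fun P => ⟨fun hf => ?_, fun hf => ?_⟩⟩ <;>
  · have := hf.length_eq
    simp at this
    omega

theorem node_split {P : ℕ → ℕ → Prop} (hP : ∀ a b, P a b → min a b < 2 → a = b)
    {l r l' r' : BTree} (h : List.Forall₂ P (ld (node l r)) (ld (node l' r'))) :
    List.Forall₂ (fun a b => P (a + 1) (b + 1)) (ld l) (ld l') ∧
      List.Forall₂ P (ld r) (ld r') := by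
  obtain ⟨xs, e1, e2, e3⟩ := ld_node_shape l r
  obtain ⟨xs', e1', e2', e3'⟩ := ld_node_shape l' r'
  rw [e2, e2'] at h
  obtain ⟨h1, h2, h3⟩ := split hP _ _ _ _ e3 e3' h
  refine ⟨?_, h3⟩
  rw [e1, e1']
  refine List.rel_append ?_ ?_
  · simpa [List.forall₂_map_left_iff, List.forall₂_map_right_iff] using h1
  · simpa using h2

theorem ld_inj : ∀ t t' : BTree, List.Forall₂ Eq (ld t) (ld t') → t = t' := by
  intro t
  induction t with
  | leaf =>
    intro t' h
    cases t' with
    | leaf => rfl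
    | node l r => exact absurd h ((ld_node_ne l r).2 _).1
  | node l r ihl ihr =>
    intro t' h
    cases t' with
    | leaf => exact absurd h ((ld_node_ne l r).2 _).2
    | node l' r' =>
      obtain ⟨h1, h2⟩ := node_split (fun a b h _ => h) h
      rw [ihl l' (h1.imp fun a b h => by omega), ihr r' h2]

/-- Combined entrywise relation. -/
def Q (k d a b : ℕ) : Prop := a % k = b % k ∧ (min a b < d → a = b)

theorem dkRel_iff (d k : ℕ) (t t' : BTree) :
    DkRel d k t t' ↔ List.Forall₂ (Q k d) (ld t) (ld t') := by
  unfold DkRel ModListEq DepthEq Q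
  generalize ld t = xs
  generalize ld t' = ys
  constructor
  · rintro ⟨h1, h2⟩
    induction h1 with
    | nil => exact List.Forall₂.nil
    | cons h _ ih =>
      rw [List.forall₂_cons] at h2
      exact List.Forall₂.cons ⟨h, h2.1⟩ (ih h2.2)
  · intro h
    exact ⟨h.imp fun _ _ h => h.1, h.imp fun _ _ h => h.2⟩

/-- One rotation step at left depth at least `e`. -/
def Step (e k : ℕ) (u u' : BTree) : Prop :=
  ∃ p : List Dir, e ≤ p.count Dir.L ∧ (IsRightKRot k p u u' ∨ IsRightKRot k p u' u)

def Conn (e k : ℕ) : BTree → BTree → Prop := Relation.ReflTransGen (Step e k)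

theorem Conn.symm {e k : ℕ} {t t' : BTree} (h : Conn e k t t') : Conn e k t' t := by
  induction h with
  | refl => exact Relation.ReflTransGen.refl
  | tail _ h2 ih =>
    obtain ⟨p, h1, h2⟩ := h2
    exact Relation.ReflTransGen.head ⟨p, h1, h2.symm⟩ ih

theorem Conn.trans {e k : ℕ} {t t' t'' : BTree} (h : Conn e k t t') (h' : Conn e k t' t'') :
    Conn e k t t'' := Relation.ReflTransGen.trans h h'

theorem rot_left {k : ℕ} {p : List Dir} {l l' : BTree} (r : BTree) (h : IsRightKRot k p l l') :
    IsRightKRot k (Dir.L :: p) (node l r) (node l' r) := by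
  obtain ⟨t0, t1, rest, h1, h2, h3⟩ := h
  exact ⟨t0, t1, rest, h1, by simpa [subtreeAt] using h2, by simp [replaceAt, h3]⟩

theorem rot_right {k : ℕ} {p : List Dir} {r r' : BTree} (l : BTree) (h : IsRightKRot k p r r') :
    IsRightKRot k (Dir.R :: p) (node l r) (node l r') := by
  obtain ⟨t0, t1, rest, h1, h2, h3⟩ := h
  exact ⟨t0, t1, rest, h1, by simpa [subtreeAt] using h2, by simp [replaceAt, h3]⟩

theorem Conn.left {e k : ℕ} {l l' : BTree} (r : BTree) (h : Conn e k l l') :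
    Conn (e + 1) k (node l r) (node l' r) := by
  induction h with
  | refl => exact Relation.ReflTransGen.refl
  | tail _ h2 ih =>
    obtain ⟨p, hp, h⟩ := h2
    refine Relation.ReflTransGen.tail ih ?_
    exact ⟨Dir.L :: p, by simpa using hp, h.imp (rot_left r) (rot_left r)⟩

theorem Conn.right {e k : ℕ} {r r' : BTree} (l : BTree) (h : Conn e k r r') :
    Conn e k (node l r) (node l r') := by
  induction h with
  | refl => exact Relation.ReflTransGen.refl
  | tail _ h2 ih =>
    obtain ⟨p, hp, h⟩ := h2
    refine Relation.ReflTransGen.tail ih ?_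
    exact ⟨Dir.R :: p, by simpa using hp, h.imp (rot_right l) (rot_right l)⟩

theorem Conn.mono {e k : ℕ} {t t' : BTree} (h : Conn e k t t') : Conn 0 k t t' := by
  induction h with
  | refl => exact Relation.ReflTransGen.refl
  | tail _ h2 ih =>
    obtain ⟨p, hp, h⟩ := h2
    exact Relation.ReflTransGen.tail ih ⟨p, Nat.zero_le _, h⟩

theorem Conn.left0 {k : ℕ} {l l' : BTree} (r : BTree) (h : Conn 0 k l l') :
    Conn 0 k (node l r) (node l' r) := (h.left r).mono

theorem Conn.leftAssoc {k : ℕ} (rest : List BTree) : ∀ {l l' : BTree}, Conn 0 k l l' →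
    Conn 0 k (leftAssoc l rest) (leftAssoc l' rest) := by
  induction rest with
  | nil => intro l l' h; exact h
  | cons a as ih => intro l l' h; exact ih (h.left0 a)

theorem Conn.root {k : ℕ} (t0 t1 : BTree) (rest : List BTree) (h : rest.length = k) :
    Conn 0 k (_root_.leftAssoc t0 (t1 :: rest)) (node t0 (_root_.leftAssoc t1 rest)) :=
  Relation.ReflTransGen.single ⟨[], Nat.zero_le _, Or.inl ⟨t0, t1, rest, h, by simp [subtreeAt],
    by simp [replaceAt]⟩⟩

/-! ### Rotations preserve the relation -/

theorem ld_leftAssoc (rest : List BTree) : ∃ ys : List ℕ, ∀ t,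
    ld (leftAssoc t rest) = (ld t).map (· + rest.length) ++ ys := by
  induction rest with
  | nil => exact ⟨[], fun t => by simp [leftAssoc]⟩
  | cons a as ih =>
    obtain ⟨ys, h⟩ := ih
    refine ⟨(ld a).map (· + as.length) ++ ys, fun t => ?_⟩
    show ld (leftAssoc (node t a) as) = _
    rw [h, ld_node]
    simp [Function.comp_def, Nat.add_assoc, Nat.add_comm]
    intros; omega

theorem Q_refl (k d a : ℕ) : Q k d a a := ⟨rfl, fun _ => rfl⟩

theorem forall_refl (k d : ℕ) (xs : List ℕ) : List.Forall₂ (Q k d) xs xs :=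
  List.forall₂_same.2 fun _ _ => Q_refl _ _ _

theorem rot_rel {k : ℕ} : ∀ (p : List Dir) (t t' : BTree), IsRightKRot k p t t' →
    List.Forall₂ (Q k (p.count Dir.L + 1)) (ld t) (ld t') := by
  intro p
  induction p with
  | nil =>
    rintro t t' ⟨t0, t1, rest, h1, h2, h3⟩
    simp only [subtreeAt, replaceAt, Option.some.injEq] at h2 h3
    subst h2 h3
    obtain ⟨ys, h⟩ := ld_leftAssoc rest
    show List.Forall₂ _ (ld (leftAssoc (node t0 t1) rest)) _
    rw [h, ld_node, ld_node, h, List.map_append, List.append_assoc]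
    refine List.rel_append ?_ (forall_refl _ _ _)
    rw [List.map_map, List.forall₂_map_left_iff, List.forall₂_map_right_iff]
    refine List.forall₂_same.2 fun a _ => ⟨?_, ?_⟩
    · simp [h1]
    · simp
  | cons x p ih =>
    rintro t t' ⟨t0, t1, rest, h1, h2, h3⟩
    cases t with
    | leaf => cases x <;> simp [subtreeAt] at h2
    | node l r =>
      cases x with
      | L =>
        simp only [subtreeAt, replaceAt, Option.map_eq_some_iff] at h2 h3
        obtain ⟨l', h3, rfl⟩ := h3
        have := ih l l' ⟨t0, t1, rest, h1, h2, h3⟩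
        rw [ld_node, ld_node]
        refine List.rel_append ?_ (forall_refl _ _ _)
        rw [List.forall₂_map_left_iff, List.forall₂_map_right_iff]
        refine this.imp fun a b ⟨h, h'⟩ => ⟨Nat.ModEq.add_right 1 h, fun hlt => ?_⟩
        rw [List.count_cons_self] at hlt
        have := h' (by omega)
        omega
      | R =>
        simp only [subtreeAt, replaceAt, Option.map_eq_some_iff] at h2 h3
        obtain ⟨r', h3, rfl⟩ := h3
        have := ih r r' ⟨t0, t1, rest, h1, h2, h3⟩
        rw [ld_node, ld_node]
        refine List.rel_append (forall_refl _ _ _) ?_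
        simpa using this

theorem Q_symm {k d a b : ℕ} (h : Q k d a b) : Q k d b a :=
  ⟨h.1.symm, fun hl => (h.2 (by omega)).symm⟩

theorem Q_trans {k d a b c : ℕ} (h : Q k d a b) (h' : Q k d b c) : Q k d a c := by
  refine ⟨h.1.trans h'.1, fun hl => ?_⟩
  have h1 := h.2
  have h2 := h'.2
  omega

theorem forall_trans {k d : ℕ} {xs ys : List ℕ} (h : List.Forall₂ (Q k d) xs ys) :
    ∀ zs, List.Forall₂ (Q k d) ys zs → List.Forall₂ (Q k d) xs zs := by
  induction h with
  | nil => intro zs h; exact h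
  | cons h _ ih =>
    intro zs h'
    cases h' with
    | cons h1 h2 => exact List.Forall₂.cons (Q_trans h h1) (ih _ h2)

theorem step_rel {e k : ℕ} {t t' : BTree} (h : Step e k t t') :
    List.Forall₂ (Q k (e + 1)) (ld t) (ld t') := by
  obtain ⟨p, hp, h | h⟩ := h
  · exact (rot_rel p _ _ h).imp fun a b ⟨h1, h2⟩ => ⟨h1, fun hl => h2 (by omega)⟩
  · exact (rot_rel p _ _ h).flip.imp fun a b h => Q_symm ⟨h.1, fun hl => h.2 (by omega)⟩

theorem conn_rel {e k : ℕ} {t t' : BTree} (h : Conn e k t t') :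
    List.Forall₂ (Q k (e + 1)) (ld t) (ld t') := by
  induction h with
  | refl => exact forall_refl _ _ _
  | tail _ h2 ih => exact forall_trans ih _ (step_rel h2)

/-! ### Normal forms -/

def lsp : BTree → ℕ
  | leaf => 0
  | node l _ => lsp l + 1

def NF (k : ℕ) : BTree → Prop
  | leaf => True
  | node l r => NF k l ∧ NF k r ∧ lsp r < k

theorem decomp {k : ℕ} : ∀ (j : ℕ) (r : BTree), NF k r → j ≤ lsp r →
    ∃ (t : BTree) (rest : List BTree), rest.length = j ∧ r = leftAssoc t rest ∧ NF k t ∧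
      (∀ s ∈ rest, NF k s ∧ lsp s < k) ∧ t.numLeaves ≤ r.numLeaves := by
  intro j
  induction j with
  | zero => intro r h _; exact ⟨r, [], rfl, rfl, h, by simp, le_rfl⟩
  | succ j ih =>
    intro r h hj
    cases r with
    | leaf => simp [lsp] at hj
    | node a b =>
      obtain ⟨ha, hb, hc⟩ := h
      simp only [lsp] at hj
      obtain ⟨t, rest, h1, h2, h3, h4, h5⟩ := ih a ha (by omega)
      refine ⟨t, rest ++ [b], by simp [h1], by simp [leftAssoc] at h2 ⊢; exact h2, h3, ?_, ?_⟩
      · intro s hs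
        rcases List.mem_append.1 hs with hs | hs
        · exact h4 s hs
        · simp at hs; subst hs; exact ⟨hb, hc⟩
      · simp only [numLeaves]; omega

theorem numLeaves_pos (t : BTree) : 1 ≤ t.numLeaves := by
  induction t with
  | leaf => simp [numLeaves]
  | node l r => simp only [numLeaves]; omega

theorem NF_leftAssoc {k : ℕ} (rest : List BTree) : ∀ l, NF k l →
    (∀ s ∈ rest, NF k s ∧ lsp s < k) → NF k (leftAssoc l rest) := by
  induction rest with
  | nil => intro l h _; exact h
  | cons a as ih =>
    intro l h h'
    have ha := h' a (by simp)
    exact ih (node l a) ⟨h, ha.1, ha.2⟩ fun s hs => h' s (by simp [hs])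

theorem nf_node {k : ℕ} (hk : 1 ≤ k) : ∀ (m : ℕ) (r l : BTree), r.numLeaves ≤ m → NF k l →
    NF k r → ∃ t, NF k t ∧ Conn 0 k (node l r) t := by
  intro m
  induction m with
  | zero => intro r l h; have := numLeaves_pos r; omega
  | succ m ih =>
    intro r l hm hl hr
    by_cases hlt : lsp r < k
    · exact ⟨node l r, ⟨hl, hr, hlt⟩, Relation.ReflTransGen.refl⟩
    · cases r with
      | leaf => simp [lsp] at hlt; omega
      | node a b =>
        obtain ⟨ha, hb, hc⟩ := hr
        simp only [lsp] at hlt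
        obtain ⟨t, rest, h1, h2, h3, h4, h5⟩ := decomp (k - 1) a ha (by omega)
        have hbp := numLeaves_pos b
        simp only [numLeaves] at hm
        obtain ⟨u, hu, hconn⟩ := ih t l (by omega) hl h3
        refine ⟨leftAssoc u (rest ++ [b]), NF_leftAssoc _ _ hu ?_, ?_⟩
        · intro s hs
          rcases List.mem_append.1 hs with hs | hs
          · exact h4 s hs
          · simp at hs; subst hs; exact ⟨hb, hc⟩
        · have e : node a b = leftAssoc t (rest ++ [b]) := by
            rw [h2]; simp [leftAssoc]
          rw [e]
          refine (Conn.root l t (rest ++ [b]) (by simp; omega)).symm.trans ?_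
          exact Conn.leftAssoc (rest ++ [b]) hconn

theorem exists_nf {k : ℕ} (hk : 1 ≤ k) (t : BTree) : ∃ u, NF k u ∧ Conn 0 k t u := by
  induction t with
  | leaf => exact ⟨leaf, trivial, Relation.ReflTransGen.refl⟩
  | node l r ihl ihr =>
    obtain ⟨l', hl, hl'⟩ := ihl
    obtain ⟨r', hr, hr'⟩ := ihr
    obtain ⟨u, hu, hu'⟩ := nf_node hk _ r' l' le_rfl hl hr
    exact ⟨u, hu, ((hl'.left0 r).trans (hr'.right l')).trans hu'⟩

/-- Sequences ending in zero with restricted consecutive jumps. -/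
inductive Good (k c : ℕ) : List ℕ → Prop
  | last : Good k c [c]
  | cons (a b : ℕ) (l : List ℕ) : a ≤ b + 1 → b + 1 < a + k → Good k c (b :: l) →
      Good k c (a :: b :: l)

theorem Good.map {k c : ℕ} {l : List ℕ} (h : Good k c l) : Good k (c + 1) (l.map (· + 1)) := by
  induction h with
  | last => exact Good.last
  | cons a b l h1 h2 _ ih =>
    exact Good.cons _ _ _ (by show a + 1 ≤ b + 1 + 1; omega)
      (by show b + 1 + 1 < a + 1 + k; omega) ih

theorem Good.append {k c c' b : ℕ} {l l' : List ℕ} (h : Good k c l) (h' : Good k c' (b :: l'))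
    (h1 : c ≤ b + 1) (h2 : b + 1 < c + k) : Good k c' (l ++ b :: l') := by
  induction h with
  | last => exact Good.cons _ _ _ h1 h2 h'
  | cons a b l i1 i2 _ ih => exact Good.cons _ _ _ i1 i2 ih

theorem ld_head (t : BTree) : ∃ l, ld t = lsp t :: l := by
  induction t with
  | leaf => exact ⟨[], rfl⟩
  | node l r ih _ =>
    obtain ⟨x, h⟩ := ih
    exact ⟨x.map (· + 1) ++ ld r, by rw [ld_node, h]; simp [lsp]⟩

theorem nf_good {k : ℕ} (t : BTree) (h : NF k t) : Good k 0 (ld t) := by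
  induction t with
  | leaf => exact Good.last
  | node l r ihl ihr =>
    obtain ⟨h1, h2, h3⟩ := h
    obtain ⟨x, hx⟩ := ld_head r
    have hr := ihr h2
    rw [ld_node]
    rw [hx] at hr ⊢
    exact (ihl h1).map.append hr (by omega) (by omega)

theorem mod_unique {k a a' b : ℕ} (h : a % k = a' % k) (h1 : a ≤ b + 1) (h2 : b + 1 < a + k)
    (h1' : a' ≤ b + 1) (h2' : b + 1 < a' + k) : a = a' := by
  rcases le_total a a' with hle | hle
  · have := Nat.eq_zero_of_dvd_of_lt ((Nat.modEq_iff_dvd' hle).1 h) (by omega)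
    omega
  · have := Nat.eq_zero_of_dvd_of_lt ((Nat.modEq_iff_dvd' hle).1 h.symm) (by omega)
    omega

theorem good_unique {k c : ℕ} {l : List ℕ} (h : Good k c l) : ∀ l', Good k c l' →
    List.Forall₂ (fun a b => a % k = b % k) l l' → List.Forall₂ Eq l l' := by
  induction h with
  | last =>
    intro l' h' hf
    cases h' with
    | last => simp
    | cons => simp at hf
  | cons a b l h1 h2 _ ih =>
    intro l' h' hf
    cases h' with
    | last => simp at hf
    | cons a' b' m h1' h2' hg =>
      rw [List.forall₂_cons] at hf
      have := ih _ hg hf.2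
      refine List.Forall₂.cons ?_ this
      rw [List.forall₂_cons] at this
      have hb := this.1
      subst hb
      exact mod_unique hf.1 h1 h2 h1' h2'

theorem rel_conn {k : ℕ} (hk : 1 ≤ k) : ∀ (e : ℕ) (t t' : BTree),
    List.Forall₂ (Q k (e + 1)) (ld t) (ld t') → Conn e k t t' := by
  intro e
  induction e with
  | zero =>
    intro t t' h
    obtain ⟨u, hu, hc⟩ := exists_nf hk t
    obtain ⟨u', hu', hc'⟩ := exists_nf hk t'
    have h1 := forall_trans (conn_rel hc.symm) _ (forall_trans h _ (conn_rel hc'))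
    have := ld_inj u u' (good_unique (nf_good u hu) _ (nf_good u' hu') (h1.imp fun _ _ h => h.1))
    subst this
    exact hc.trans hc'.symm
  | succ e ihe =>
    intro t
    induction t with
    | leaf =>
      intro t' h
      cases t' with
      | leaf => exact Relation.ReflTransGen.refl
      | node l r => exact absurd h ((ld_node_ne l r).2 _).1
    | node l r _ ihr =>
      intro t' h
      cases t' with
      | leaf => exact absurd h ((ld_node_ne l r).2 _).2
      | node l' r' =>
        obtain ⟨h1, h2⟩ := node_split (fun a b h hl => h.2 (by omega)) h
        refine ((ihe l l' (h1.imp fun a b h => ⟨?_, fun hl => ?_⟩)).left r).trans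
          ((ihr r' h2).right l')
        · exact Nat.ModEq.add_right_cancel' 1 h.1
        · have := h.2 (by omega)
          omega

end S12

/-- for `d,k ≥ 1` and `t,t' ∈ T_n`, `ld(t) ~_k^d ld(t')` iff `t'` can be
obtained from `t` by a finite sequence of left or right `k`-rotations, each performed at
a node of left depth at least `d-1`; i.e. the equivalence classes are exactly the
connected components of the Hasse diagram of the `(d;k)`-order. -/
theorem stmt12 (d k n : ℕ) (hd : 1 ≤ d) (hk : 1 ≤ k) (t t' : BTree)
    (ht : t.numLeaves = n + 1) (ht' : t'.numLeaves = n + 1) :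
    DkRel d k t t' ↔
      Relation.ReflTransGen
        (fun u u' => ∃ p : List Dir, d - 1 ≤ p.count Dir.L ∧
          (IsRightKRot k p u u' ∨ IsRightKRot k p u' u)) t t' := by
  obtain ⟨e, rfl⟩ : ∃ e, d = e + 1 := ⟨d - 1, by omega⟩
  rw [S12.dkRel_iff]
  exact ⟨fun h => S12.rel_conn hk e t t' h, fun h => S12.conn_rel (e := e) h⟩
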